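/- Let L be an invertible real m×m matrix, let N : ℝ^m → ℝ^m be continuous, let γ ∈ ℝ with γ ≠ 1, and let (x_n) be a sequence in ℝ^m generated by the Petviashvili iteration L x_{n+1} = m(x_n)^γ·N(x_n), where m(y) = ⟨Ly, y⟩/⟨N(y), y⟩ (assumed well defined along the sequence). If x_n converges to a limit x with ⟨N(x), x⟩ ≠ 0 and m(x) > 0, then x solves the original system L x = N(x). -/

import Mathlib

open Matrix Filter

/-!
Passing to the limit in the iteration gives `L x = m(x) ^ γ • N x`. Pairing this identity with `x`
yields `m(x) = m(x) ^ γ`, and as `m(x) > 0` and `γ ≠ 1` this forces `m(x) = 1`.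
-/

theorem eq_one_of_rpow_eq_self {t γ : ℝ} (ht : 0 < t) (hγ : γ ≠ 1) (h : t ^ γ = t) : t = 1 := by
  by_contra hone
  exact hγ ((Real.rpow_right_inj ht hone).mp (h.trans (Real.rpow_one t).symm))

section Petviashvili

variable {E F : Type*} [AddCommGroup F] [Module ℝ F]
  {φ : E → Module.Dual ℝ F} {L N : E → F} {γ : ℝ} {y : E}

/-- The stabilizing factor `m(y) = ⟨L y, y⟩ / ⟨N y, y⟩` of the Petviashvili iteration, for a pairing
`⟨v, y⟩ = φ y v` that is linear in `v`. It is `0` where `⟨N y, y⟩ = 0`, so a nonzero stabilizing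
factor is always a well-defined one. -/
noncomputable def stabilizingFactor (φ : E → Module.Dual ℝ F) (L N : E → F) (y : E) : ℝ :=
  φ y (L y) / φ y (N y)

theorem pairing_ne_zero_of_stabilizingFactor_ne_zero (h : stabilizingFactor φ L N y ≠ 0) :
    φ y (N y) ≠ 0 :=
  (div_ne_zero_iff.mp h).2

theorem stabilizingFactor_eq_of_eq_smul {c : ℝ} (hy : φ y (N y) ≠ 0) (h : L y = c • N y) :
    stabilizingFactor φ L N y = c := by
  rw [stabilizingFactor, h, map_smul, smul_eq_mul, mul_div_cancel_right₀ c hy]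

theorem eq_of_eq_stabilizingFactor_rpow_smul (hγ : γ ≠ 1) (hpos : 0 < stabilizingFactor φ L N y)
    (h : L y = stabilizingFactor φ L N y ^ γ • N y) : L y = N y := by
  have hfix : stabilizingFactor φ L N y = stabilizingFactor φ L N y ^ γ :=
    stabilizingFactor_eq_of_eq_smul (pairing_ne_zero_of_stabilizingFactor_ne_zero hpos.ne') h
  have hone : stabilizingFactor φ L N y = 1 := eq_one_of_rpow_eq_self hpos hγ hfix.symm
  rwa [hone, Real.one_rpow, one_smul] at h

variable [TopologicalSpace E] [TopologicalSpace F]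

theorem continuousAt_stabilizingFactor (hφ : Continuous fun p : E × F ↦ φ p.1 p.2)
    (hL : ContinuousAt L y) (hN : ContinuousAt N y) (hy : φ y (N y) ≠ 0) :
    ContinuousAt (stabilizingFactor φ L N) y := by
  have hpair {G : E → F} (hG : ContinuousAt G y) : ContinuousAt (fun z ↦ φ z (G z)) y :=
    hφ.continuousAt.comp (continuousAt_id.prodMk hG)
  exact (hpair hL).div (hpair hN) hy

theorem petviashvili_limit_solves_system_general [ContinuousSMul ℝ F] [T2Space F]
    (hφ : Continuous fun p : E × F ↦ φ p.1 p.2) (hγ : γ ≠ 1) {x : ℕ → E}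
    (hiter : ∀ᶠ n in atTop, L (x (n + 1)) = stabilizingFactor φ L N (x n) ^ γ • N (x n))
    (hconv : Tendsto x atTop (nhds y)) (hL : ContinuousAt L y) (hN : ContinuousAt N y)
    (hpos : 0 < stabilizingFactor φ L N y) : L y = N y := by
  have hfactor : ContinuousAt (stabilizingFactor φ L N) y :=
    continuousAt_stabilizingFactor hφ hL hN (pairing_ne_zero_of_stabilizingFactor_ne_zero hpos.ne')
  have hright : ContinuousAt (fun z ↦ stabilizingFactor φ L N z ^ γ • N z) y :=
    (hfactor.rpow_const (Or.inl hpos.ne')).smul hN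
  have hlimit : L y = stabilizingFactor φ L N y ^ γ • N y :=
    tendsto_nhds_unique_of_eventuallyEq (hL.tendsto.comp (hconv.comp (tendsto_add_atTop_nat 1)))
      (hright.tendsto.comp hconv) hiter
  exact eq_of_eq_stabilizingFactor_rpow_smul hγ hpos hlimit

end Petviashvili

theorem petviashvili_limit_solves_system
    {m : ℕ} (L : Matrix (Fin m) (Fin m) ℝ) (hL : IsUnit L.det)
    (N : (Fin m → ℝ) → (Fin m → ℝ)) (hN : Continuous N)
    (γ : ℝ) (hγ : γ ≠ 1)
    (x : ℕ → (Fin m → ℝ))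
    (hwd : ∀ n, N (x n) ⬝ᵥ (x n) ≠ 0)
    (hiter : ∀ n, L.mulVec (x (n + 1))
      = ((L.mulVec (x n) ⬝ᵥ (x n)) / (N (x n) ⬝ᵥ (x n))) ^ γ • N (x n))
    (xlim : Fin m → ℝ)
    (hconv : Tendsto x atTop (nhds xlim))
    (hne : N xlim ⬝ᵥ xlim ≠ 0)
    (hpos : 0 < (L.mulVec xlim ⬝ᵥ xlim) / (N xlim ⬝ᵥ xlim)) :
    L.mulVec xlim = N xlim :=
  petviashvili_limit_solves_system_general (φ := (dotProductBilin ℝ ℝ).flip)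
    (continuous_snd.dotProduct continuous_fst) hγ (.of_forall hiter) hconv
    (continuous_const.matrix_mulVec continuous_id).continuousAt hN.continuousAt hpos
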